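/- arXiv:2006.13293 — 4 statements merged into one kernel-verified Lean document; each statement's English description precedes it below -/
import Mathlib

section
/- For μ-a.e. x ∈ X, the limit lim_{n→∞} ‖A_n(x,·)‖_{L²(Y,ν)} exists (this is the existence of the drift in the abelian case of the multiplicative ergodic theorem, deduced from the pointwise ergodic theorem). -/
open MeasureTheory Filter Real Topology

/-- Garsia maximal functions. -/
noncomputable def garsiaMax {Z : Type*} (T : Z → Z) (φ : Z → ℝ) : ℕ → Z → ℝ
  | 0 => fun _ => 0
  | n + 1 => fun z => max 0 (φ z + garsiaMax T φ n (T z))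

lemma garsiaMax_nonneg {Z : Type*} (T : Z → Z) (φ : Z → ℝ) (n : ℕ) (z : Z) :
    0 ≤ garsiaMax T φ n z := by
  cases n with
  | zero => simp [garsiaMax]
  | succ n => simp [garsiaMax]

lemma garsiaMax_le_succ {Z : Type*} (T : Z → Z) (φ : Z → ℝ) (n : ℕ) :
    ∀ z, garsiaMax T φ n z ≤ garsiaMax T φ (n + 1) z := by
  induction n with
  | zero => intro z; simp [garsiaMax]
  | succ n ih =>
    intro z
    have h := ih (T z)
    rw [garsiaMax, garsiaMax]
    exact max_le_max le_rfl (by linarith)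

lemma birkhoffSum_le_garsiaMax {Z : Type*} (T : Z → Z) (φ : Z → ℝ) (n : ℕ) :
    ∀ z, birkhoffSum T φ n z ≤ garsiaMax T φ n z := by
  induction n with
  | zero => intro z; simp [garsiaMax]
  | succ n ih =>
    intro z
    have h := ih (T z)
    rw [birkhoffSum_succ', garsiaMax]
    exact le_max_of_le_right (by linarith)

lemma garsiaMax_measurable {Z : Type*} [MeasurableSpace Z] {T : Z → Z} {φ : Z → ℝ}
    (hT : Measurable T) (hφ : Measurable φ) (n : ℕ) : Measurable (garsiaMax T φ n) := by
  induction n with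
  | zero => exact measurable_const
  | succ n ih => exact measurable_const.max (hφ.add (ih.comp hT))

lemma garsiaMax_integrable {Z : Type*} [MeasurableSpace Z] {ρ : Measure Z} [IsFiniteMeasure ρ]
    {T : Z → Z} {φ : Z → ℝ}
    (hT : MeasurePreserving T ρ ρ) (hφ : Integrable φ ρ) (n : ℕ) :
    Integrable (garsiaMax T φ n) ρ := by
  induction n with
  | zero => exact integrable_const _
  | succ n ih => exact (integrable_const 0).sup (hφ.add (hT.integrable_comp_of_integrable ih))

/-- Maximal ergodic theorem. -/
lemma maximal_ergodic {Z : Type*} [MeasurableSpace Z] {ρ : Measure Z} [IsFiniteMeasure ρ]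
    {T : Z → Z} {φ : Z → ℝ}
    (hT : MeasurePreserving T ρ ρ) (hφm : Measurable φ) (hφ : Integrable φ ρ)
    (h : ∀ᵐ z ∂ρ, ∃ n, 0 < birkhoffSum T φ n z) : 0 ≤ ∫ z, φ z ∂ρ := by
  set s : ℕ → Set Z := fun n => {z | 0 < garsiaMax T φ n z} with hs
  have hsm : ∀ n, MeasurableSet (s n) := fun n =>
    measurableSet_lt measurable_const (garsiaMax_measurable hT.measurable hφm n)
  have hmono : Monotone s := by
    refine monotone_nat_of_le_succ fun n z hz => ?_
    exact lt_of_lt_of_le hz (garsiaMax_le_succ T φ n z)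
  have hpos : ∀ n, 0 ≤ ∫ z in s n, φ z ∂ρ := by
    intro n
    have hi := garsiaMax_integrable hT hφ n
    have hi' : Integrable (fun z => garsiaMax T φ n (T z)) ρ := hT.integrable_comp_of_integrable hi
    have e : ∫ z, garsiaMax T φ n (T z) ∂ρ = ∫ z, garsiaMax T φ n z ∂ρ := by
      have := integral_map (μ := ρ) (f := garsiaMax T φ n) hT.measurable.aemeasurable
        (garsiaMax_measurable hT.measurable hφm n).aestronglyMeasurable
      rw [hT.map_eq] at this
      exact this.symm
    have e0 : ∫ z, (garsiaMax T φ n z - garsiaMax T φ n (T z)) ∂ρ = 0 := by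
      rw [integral_sub hi hi', e, sub_self]
    rw [← integral_indicator (hsm n), ← e0]
    refine integral_mono (hi.sub hi') (hφ.indicator (hsm n)) fun z => ?_
    by_cases hz : z ∈ s n
    · simp only [Set.indicator_of_mem hz]
      cases n with
      | zero => simp [hs, garsiaMax] at hz
      | succ n =>
        have h1 := garsiaMax_le_succ T φ n (T z)
        have h2 : 0 < garsiaMax T φ (n + 1) z := hz
        have h3 : garsiaMax T φ (n + 1) z = φ z + garsiaMax T φ n (T z) := by
          rw [garsiaMax] at h2 ⊢
          rcases lt_max_iff.1 h2 with h | h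
          · exact absurd h (lt_irrefl _)
          · exact max_eq_right h.le
        linarith
    · simp only [Set.indicator_of_notMem hz]
      have h1 : garsiaMax T φ n z ≤ 0 := not_lt.1 hz
      have h2 := garsiaMax_nonneg T φ n (T z)
      linarith
  have hlim := tendsto_setIntegral_of_monotone hsm hmono (hφ.integrableOn (s := ⋃ n, s n))
  have hU : ∫ z in ⋃ n, s n, φ z ∂ρ = ∫ z, φ z ∂ρ := by
    have : (⋃ n, s n : Set Z) =ᵐ[ρ] Set.univ := by
      rw [eventuallyEq_univ]
      filter_upwards [h] with z ⟨n, hn⟩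
      exact Set.mem_iUnion.2 ⟨n, hn.trans_le (birkhoffSum_le_garsiaMax T φ n z)⟩
    rw [setIntegral_congr_set this, setIntegral_univ]
  rw [← hU]
  exact ge_of_tendsto' hlim hpos

/-- Points with upcrossings strictly around `(a, b)`. -/
def oscSet {Z : Type*} (T : Z → Z) (φ : Z → ℝ) (a b : ℝ) : Set Z :=
  {z | (∃ q : ℚ, (q : ℝ) < a ∧ ∃ᶠ n in atTop, birkhoffAverage ℝ T φ n z < q) ∧
    (∃ q : ℚ, b < (q : ℝ) ∧ ∃ᶠ n in atTop, (q : ℝ) < birkhoffAverage ℝ T φ n z)}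

lemma osc_transfer {u v : ℕ → ℝ} (h : Tendsto (fun n => u n - v n) atTop (𝓝 0)) {a b : ℝ}
    (hu : (∃ q : ℚ, (q : ℝ) < a ∧ ∃ᶠ n in atTop, u n < q) ∧
      (∃ q : ℚ, b < (q : ℝ) ∧ ∃ᶠ n in atTop, (q : ℝ) < u n)) :
    (∃ q : ℚ, (q : ℝ) < a ∧ ∃ᶠ n in atTop, v n < q) ∧
      (∃ q : ℚ, b < (q : ℝ) ∧ ∃ᶠ n in atTop, (q : ℝ) < v n) := by
  obtain ⟨⟨q, hq, h1⟩, ⟨r, hr, h2⟩⟩ := hu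
  constructor
  · obtain ⟨q', hq1, hq2⟩ := exists_rat_btwn hq
    refine ⟨q', hq2, ?_⟩
    have := h.eventually (lt_mem_nhds (show -((q' : ℝ) - q) < 0 by linarith))
    refine (h1.and_eventually this).mono fun n hn => ?_
    linarith [hn.1, hn.2]
  · obtain ⟨q', hq1, hq2⟩ := exists_rat_btwn hr
    refine ⟨q', hq1, ?_⟩
    have := h.eventually (gt_mem_nhds (show 0 < ((r : ℝ) - q') by linarith))
    refine (h2.and_eventually this).mono fun n hn => ?_
    linarith [hn.1, hn.2]

lemma avg_measurable {Z : Type*} [MeasurableSpace Z] {T : Z → Z} {φ : Z → ℝ}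
    (hT : Measurable T) (hφ : Measurable φ) (n : ℕ) :
    Measurable (fun z => birkhoffAverage ℝ T φ n z) := by
  have h : Measurable (fun z => ∑ k ∈ Finset.range n, φ (T^[k] z)) :=
    Finset.measurable_sum _ fun k _ => hφ.comp (hT.iterate k)
  exact h.const_smul ((n : ℝ)⁻¹)

lemma oscSet_measurable {Z : Type*} [MeasurableSpace Z] {T : Z → Z} {φ : Z → ℝ}
    (hT : Measurable T) (hφ : Measurable φ) (a b : ℝ) : MeasurableSet (oscSet T φ a b) := by
  have hm := avg_measurable hT hφ
  unfold oscSet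
  simp only [frequently_atTop]
  refine MeasurableSet.inter ?_ ?_
  · refine measurableSet_setOfPred.2 (Measurable.exists fun q => Measurable.and measurable_const
      (Measurable.forall fun N => Measurable.exists fun n => Measurable.and measurable_const ?_))
    exact measurableSet_setOfPred.1 (measurableSet_lt (hm n) measurable_const)
  · refine measurableSet_setOfPred.2 (Measurable.exists fun q => Measurable.and measurable_const
      (Measurable.forall fun N => Measurable.exists fun n => Measurable.and measurable_const ?_))
    exact measurableSet_setOfPred.1 (measurableSet_lt measurable_const (hm n))

lemma avg_shift {Z : Type*} (T : Z → Z) {φ : Z → ℝ} {C : ℝ} (hC : ∀ z, |φ z| ≤ C) (z : Z) :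
    Tendsto (fun n => birkhoffAverage ℝ T φ n (T z) - birkhoffAverage ℝ T φ n z)
      atTop (𝓝 0) := by
  refine tendsto_birkhoffAverage_apply_sub_birkhoffAverage' ℝ ?_ T z
  refine (Metric.isBounded_Icc (-C) C).subset ?_
  rintro _ ⟨z, rfl⟩
  exact abs_le.1 (hC z)

lemma oscSet_invariant {Z : Type*} (T : Z → Z) {φ : Z → ℝ} {C : ℝ} (hC : ∀ z, |φ z| ≤ C)
    (a b : ℝ) : T ⁻¹' oscSet T φ a b = oscSet T φ a b := by
  ext z
  have h := avg_shift T hC z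
  constructor
  · intro hz
    exact osc_transfer h hz
  · intro hz
    refine osc_transfer (u := fun n => birkhoffAverage ℝ T φ n z) ?_ hz
    simpa using h.neg

lemma oscSet_null {Z : Type*} [MeasurableSpace Z] {ρ : Measure Z} [IsFiniteMeasure ρ]
    {T : Z → Z} (hT : MeasurePreserving T ρ ρ) {φ : Z → ℝ} (hφ : Measurable φ)
    {C : ℝ} (hC : ∀ z, |φ z| ≤ C) {a b : ℝ} (hab : a < b) : ρ (oscSet T φ a b) = 0 := by
  set E := oscSet T φ a b with hE
  have hEm : MeasurableSet E := oscSet_measurable hT.measurable hφ a b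
  have hTE : MeasurePreserving T (ρ.restrict E) (ρ.restrict E) := by
    have := hT.restrict_preimage hEm
    rwa [hE, oscSet_invariant T hC a b] at this
  have hi : Integrable φ (ρ.restrict E) :=
    Integrable.of_bound hφ.aestronglyMeasurable C (ae_of_all _ hC)
  have key : ∀ (n : ℕ) (z : Z), 0 < n →
      birkhoffSum T φ n z = n * birkhoffAverage ℝ T φ n z := by
    intro n z hn
    have : (n : ℝ) ≠ 0 := by positivity
    simp [birkhoffAverage, this]
  have h1 : 0 ≤ ∫ z, (φ z - b) ∂(ρ.restrict E) := by
    refine maximal_ergodic hTE (hφ.sub measurable_const) (hi.sub (integrable_const b)) ?_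
    filter_upwards [ae_restrict_mem hEm] with z hz
    obtain ⟨q, hq, h⟩ := hz.2
    obtain ⟨n, hn, hn0⟩ := (h.and_eventually (eventually_gt_atTop 0)).exists
    refine ⟨n, ?_⟩
    have e : birkhoffSum T (fun z => φ z - b) n z = n * (birkhoffAverage ℝ T φ n z - b) := by
      rw [mul_sub, ← key n z hn0]
      simp [birkhoffSum]
    rw [e]
    have : (0 : ℝ) < n := by exact_mod_cast hn0
    exact mul_pos this (by linarith)
  have h2 : 0 ≤ ∫ z, (a - φ z) ∂(ρ.restrict E) := by
    refine maximal_ergodic hTE (measurable_const.sub hφ) ((integrable_const a).sub hi) ?_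
    filter_upwards [ae_restrict_mem hEm] with z hz
    obtain ⟨q, hq, h⟩ := hz.1
    obtain ⟨n, hn, hn0⟩ := (h.and_eventually (eventually_gt_atTop 0)).exists
    refine ⟨n, ?_⟩
    have e : birkhoffSum T (fun z => a - φ z) n z = n * (a - birkhoffAverage ℝ T φ n z) := by
      rw [mul_sub, ← key n z hn0]
      simp [birkhoffSum]
    rw [e]
    have : (0 : ℝ) < n := by exact_mod_cast hn0
    exact mul_pos this (by linarith)
  rw [integral_sub hi (integrable_const b)] at h1
  rw [integral_sub (integrable_const a) hi] at h2
  simp only [integral_const, smul_eq_mul, measureReal_restrict_apply_univ] at h1 h2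
  have h3 : ρ.real E = 0 := by
    have h0 : 0 ≤ ρ.real E := measureReal_nonneg
    by_contra hne
    have : 0 < ρ.real E := lt_of_le_of_ne h0 (Ne.symm hne)
    nlinarith
  exact (measureReal_eq_zero_iff).1 h3

lemma avg_bound {Z : Type*} (T : Z → Z) {φ : Z → ℝ} {C : ℝ} (hC0 : 0 ≤ C)
    (hC : ∀ z, |φ z| ≤ C) (n : ℕ) (z : Z) : |birkhoffAverage ℝ T φ n z| ≤ C := by
  rcases Nat.eq_zero_or_pos n with rfl | hn
  · simpa using hC0
  have hn' : (0 : ℝ) < n := by exact_mod_cast hn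
  have : |birkhoffSum T φ n z| ≤ n * C := by
    unfold birkhoffSum
    refine (Finset.abs_sum_le_sum_abs _ _).trans ?_
    refine (Finset.sum_le_sum fun k _ => hC _).trans ?_
    simp
  rw [birkhoffAverage, smul_eq_mul, abs_mul, abs_of_pos (inv_pos.2 hn'), inv_mul_le_iff₀ hn']
  exact this

/-- Birkhoff pointwise ergodic theorem for bounded functions. -/
lemma birkhoff_bounded {Z : Type*} [MeasurableSpace Z] {ρ : Measure Z} [IsFiniteMeasure ρ]
    {T : Z → Z} (hT : MeasurePreserving T ρ ρ) {φ : Z → ℝ} (hφ : Measurable φ)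
    {C : ℝ} (hC0 : 0 ≤ C) (hC : ∀ z, |φ z| ≤ C) :
    ∀ᵐ z ∂ρ, ∃ L : ℝ, Tendsto (fun n => birkhoffAverage ℝ T φ n z) atTop (𝓝 L) := by
  have h : ∀ᵐ z ∂ρ, ∀ a b : ℚ, a < b → z ∉ oscSet T φ a b := by
    rw [ae_all_iff]; intro a
    rw [ae_all_iff]; intro b
    by_cases hab : a < b
    · have := oscSet_null hT hφ hC (a := a) (b := b) (by exact_mod_cast hab)
      filter_upwards [measure_eq_zero_iff_ae_notMem.1 this] with z hz _ using hz
    · exact ae_of_all _ fun z h => absurd h hab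
  filter_upwards [h] with z hz
  refine tendsto_of_no_upcrossings (s := Set.range ((↑) : ℚ → ℝ)) Rat.denseRange_cast ?_ ?_ ?_
  · rintro _ ⟨a, rfl⟩ _ ⟨b, rfl⟩ hab ⟨h1, h2⟩
    obtain ⟨a', ha, ha'⟩ := exists_rat_btwn hab
    obtain ⟨b', hb, hb'⟩ := exists_rat_btwn ha'
    exact hz a' b' (by exact_mod_cast hb) ⟨⟨a, ha, h1⟩, ⟨b, hb', h2⟩⟩
  · exact isBoundedUnder_of ⟨C, fun n => (abs_le.1 (avg_bound T hC0 hC n z)).2⟩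
  · exact isBoundedUnder_of ⟨-C, fun n => (abs_le.1 (avg_bound T hC0 hC n z)).1⟩

/-- abelian MET, existence of the drift: for μ-a.e. x the limit of the
L²(Y,ν)-norms of the ergodic averages A_n(x,·) exists. -/
theorem abelian_MET_drift_exists
    {X Y : Type*} [MeasurableSpace X] [MeasurableSpace Y]
    [StandardBorelSpace X] [StandardBorelSpace Y]
    (μ : Measure X) (ν : Measure Y)
    [IsProbabilityMeasure μ] [IsProbabilityMeasure ν]
    (f : X → X) (hf : Ergodic f μ)
    (R : ℝ) (hR : 1 < R)
    (g : X × Y → ℝ) (hg : Measurable g)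
    (hbound : ∀ᵐ p ∂(μ.prod ν), R⁻¹ ≤ |g p| ∧ |g p| ≤ R) :
    ∀ᵐ x ∂μ, ∃ L : ℝ,
      Tendsto (fun n : ℕ =>
          (∫ y, ((1 / (n : ℝ)) * ∑ k ∈ Finset.range n, Real.log |g (f^[k] x, y)|) ^ 2 ∂ν)
            ^ ((1 : ℝ) / 2))
        atTop (𝓝 L) := by
  set C := Real.log R with hCdef
  have hC0 : 0 ≤ C := Real.log_nonneg hR.le
  set φ : X × Y → ℝ := fun p => max (-C) (min C (Real.log |g p|)) with hφdef
  have habs : Measurable fun p => |g p| := hg.abs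
  have hφ : Measurable φ := measurable_const.max (measurable_const.min
    (Real.measurable_log.comp habs))
  have hφC : ∀ p, |φ p| ≤ C := fun p =>
    abs_le.2 ⟨le_max_left _ _, max_le (by linarith) (min_le_left _ _)⟩
  set T : X × Y → X × Y := Prod.map f id with hTdef
  have hT : MeasurePreserving T (μ.prod ν) (μ.prod ν) :=
    hf.toMeasurePreserving.prod (MeasurePreserving.id ν)
  have hTk : ∀ (k : ℕ) (x : X) (y : Y), T^[k] (x, y) = (f^[k] x, y) := by
    intro k x y
    simp [hTdef, Prod.map_iterate]
  have heq : ∀ᵐ p ∂(μ.prod ν), φ p = Real.log |g p| := by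
    filter_upwards [hbound] with p hp
    have hR0 : 0 < R := by linarith
    have hg0 : 0 < |g p| := (inv_pos.2 hR0).trans_le hp.1
    have h1 : Real.log |g p| ≤ C := Real.log_le_log hg0 hp.2
    have h2 : -C ≤ Real.log |g p| := by
      rw [hCdef, ← Real.log_inv]
      exact Real.log_le_log (inv_pos.2 hR0) hp.1
    simp only [hφdef]
    rw [min_eq_right h1, max_eq_right h2]
  have heqk : ∀ᵐ p ∂(μ.prod ν), ∀ k : ℕ, φ (T^[k] p) = Real.log |g (T^[k] p)| :=
    ae_all_iff.2 fun k => (hT.iterate k).quasiMeasurePreserving.ae heq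
  have hB := birkhoff_bounded hT hφ hC0 hφC
  filter_upwards [Measure.ae_ae_of_ae_prod heqk, Measure.ae_ae_of_ae_prod hB] with x hx1 hx2
  have hcongr : ∀ n : ℕ,
      (∫ y, ((1 / (n : ℝ)) * ∑ k ∈ Finset.range n, Real.log |g (f^[k] x, y)|) ^ 2 ∂ν)
        = ∫ y, (birkhoffAverage ℝ T φ n (x, y)) ^ 2 ∂ν := by
    intro n
    refine integral_congr_ae ?_
    filter_upwards [hx1] with y hy
    simp only [birkhoffAverage, birkhoffSum, smul_eq_mul, one_div]
    congr 2
    refine Finset.sum_congr rfl fun k _ => ?_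
    rw [hy k, hTk]
  simp only [hcongr]
  let A : Y → ℝ := fun y => limUnder atTop fun n => birkhoffAverage ℝ T φ n (x, y)
  have hlim : Tendsto (fun n : ℕ => ∫ y, (birkhoffAverage ℝ T φ n (x, y)) ^ 2 ∂ν) atTop
      (𝓝 (∫ y, (A y) ^ 2 ∂ν)) := by
    refine tendsto_integral_of_dominated_convergence (fun _ => C ^ 2) ?_ (integrable_const _) ?_ ?_
    · intro n
      exact (((avg_measurable hT.measurable hφ n).comp measurable_prodMk_left).pow_const
        2).aestronglyMeasurable
    · intro n
      refine ae_of_all _ fun y => ?_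
      rw [Real.norm_eq_abs, abs_pow]
      exact pow_le_pow_left₀ (abs_nonneg _) (avg_bound T hC0 hφC n (x, y)) 2
    · filter_upwards [hx2] with y hy
      exact (tendsto_nhds_limUnder hy).pow 2
  exact ⟨_, hlim.rpow_const (Or.inr (by norm_num))⟩
end

section
/- There exist standard probability spaces (X,μ) and (Y,ν), an invertible ergodic measure-preserving transformation f : X → X, and a measurable function g : X × Y → ℝ taking only the values 1 and 2, such that for μ-a.e. x ∈ X: (i) (1/n) ∑_{k=0}^{n-1} log g(f^k x, ·) converges in L²(Y,ν) to the constant function (log 2)/2, yet (ii) lim_{n→∞} ( ∫_Y ∏_{k=0}^{n-1} g(f^k x, y)² dν(y) )^{1/(2n)} = 2. In particular, for ξ = 1_Y one has lim_n ‖c(n,x)ξ‖₂^{1/n} = 2 > √2 = lim_n ‖Λ(x)ⁿξ‖₂^{1/n}, where c(n,x)(y) = ∏_{k=0}^{n-1} g(f^k x, y) and Λ(x) = exp((log 2)/2) = √2 is the limit operator; so the strict inequality liminf_n ‖c(n,x)ξ‖₂^{1/n} > lim_n ‖Λ(x)ⁿξ‖₂^{1/n} can occur for a uniformly bounded L^∞(Y,ν)-valued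 cocycle. -/
open MeasureTheory Filter Real Topology

/-- A probability measure on `ℕ` with polynomially decaying atoms. -/
lemma exists_poly_measure : ∃ ν : Measure ℕ, IsProbabilityMeasure ν ∧
    ∃ d : ℝ, 0 < d ∧ ∀ m : ℕ, (d / ((m : ℝ) + 1)) ^ 2 ≤ ν.real {m} := by
  have hs : Summable (fun m : ℕ => 1 / ((m : ℝ) + 1) ^ 2) := by
    have := (summable_nat_add_iff 1).2 (Real.summable_one_div_nat_pow.2 (one_lt_two))
    simpa using this
  have hpos : ∀ m : ℕ, 0 < 1 / ((m : ℝ) + 1) ^ 2 := fun m => by positivity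
  have hT : 0 < ∑' m : ℕ, 1 / ((m : ℝ) + 1) ^ 2 :=
    hs.tsum_pos (fun m => (hpos m).le) 0 (hpos 0)
  set T := ∑' m : ℕ, 1 / ((m : ℝ) + 1) ^ 2 with hTdef
  have htsum : ∑' m : ℕ, ENNReal.ofReal (1 / ((m : ℝ) + 1) ^ 2) = ENNReal.ofReal T :=
    (ENNReal.ofReal_tsum_of_nonneg (fun m => (hpos m).le) hs).symm
  let p : PMF ℕ := PMF.normalize (fun m : ℕ => ENNReal.ofReal (1 / ((m : ℝ) + 1) ^ 2))
    (by rw [htsum]; simpa using hT) (by rw [htsum]; exact ENNReal.ofReal_ne_top)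
  refine ⟨p.toMeasure, inferInstance, √(T⁻¹), by positivity, fun m => ?_⟩
  rw [Measure.real, PMF.toMeasure_apply_singleton _ _ (measurableSet_singleton m)]
  have : p m = ENNReal.ofReal (1 / ((m : ℝ) + 1) ^ 2) * (ENNReal.ofReal T)⁻¹ := by
    rw [← htsum]; rfl
  rw [this, ENNReal.toReal_mul, ENNReal.toReal_inv, ENNReal.toReal_ofReal (hpos m).le,
    ENNReal.toReal_ofReal hT.le, div_pow, Real.sq_sqrt (by positivity)]
  apply le_of_eq
  ring

/-- Averages of an anti-periodic sequence tend to zero. -/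
lemma antiperiodic_avg (a : ℕ → ℝ) (h : ℕ) (hh : 0 < h) (ha : ∀ k, a (k + h) = - a k) :
    Tendsto (fun n : ℕ => (1 / (n : ℝ)) * ∑ k ∈ Finset.range n, a k) atTop (𝓝 0) := by
  set S : ℕ → ℝ := fun n => ∑ k ∈ Finset.range n, a k with hS
  have h1 : ∀ n, S (n + h) = S h - S n := by
    intro n
    simp only [hS]
    rw [add_comm n h, Finset.sum_range_add]
    have : ∀ k, a (h + k) = - a k := fun k => by rw [add_comm]; exact ha k
    simp [this, sub_eq_add_neg]
  have h2 : Function.Periodic S (2 * h) := by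
    intro n
    rw [two_mul, ← add_assoc, h1, h1]; ring
  have hb : ∀ n, |S n| ≤ ∑ k ∈ Finset.range (2 * h), |a k| := by
    intro n
    rw [← h2.map_mod_nat n]
    refine (Finset.abs_sum_le_sum_abs _ _).trans ?_
    refine Finset.sum_le_sum_of_subset_of_nonneg ?_ (fun _ _ _ => abs_nonneg _)
    intro k hk
    have := Nat.mod_lt n (show 0 < 2 * h by omega)
    simp only [Finset.mem_range] at *
    omega
  refine squeeze_zero_norm (a := fun n : ℕ => (∑ k ∈ Finset.range (2 * h), |a k|) / (n : ℝ)) ?_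
    (tendsto_const_div_atTop_nhds_zero_nat _)
  intro n
  rw [Real.norm_eq_abs, abs_mul, abs_of_nonneg (by positivity : (0:ℝ) ≤ 1 / n), one_div, mul_comm,
    div_eq_mul_inv]
  exact mul_le_mul_of_nonneg_right (hb n) (by positivity)

/-- subexponential factors do not matter -/
lemma root_limit (I : ℕ → ℝ) (d : ℝ) (hd : 0 < d)
    (hlow : ∀ n : ℕ, 1 ≤ n → (d / n) ^ 2 * 4 ^ n ≤ I n) (hup : ∀ n, I n ≤ 4 ^ n) :
    Tendsto (fun n : ℕ => I n ^ (1 / (2 * (n : ℝ)))) atTop (𝓝 2) := by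
  have e4 : ∀ n : ℕ, 1 ≤ n → ((4 : ℝ) ^ n) ^ (1 / (2 * (n : ℝ))) = 2 := by
    intro n hn
    have hn' : (n : ℝ) ≠ 0 := by positivity
    rw [show (4 : ℝ) = 2 ^ 2 by norm_num, ← pow_mul, ← Real.rpow_natCast, ← Real.rpow_mul (by norm_num)]
    rw [show ((2 * n : ℕ) : ℝ) * (1 / (2 * (n : ℝ))) = 1 by push_cast; field_simp]
    simp
  have hl : Tendsto (fun n : ℕ => d ^ (1 / (n : ℝ)) / (n : ℝ) ^ (1 / (n : ℝ)) * 2) atTop (𝓝 2) := by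
    have t1 : Tendsto (fun n : ℕ => d ^ (1 / (n : ℝ))) atTop (𝓝 1) := by
      have := (tendsto_const_nhds (x := d) (f := (atTop : Filter ℕ))).rpow
        (tendsto_one_div_atTop_nhds_zero_nat (𝕜 := ℝ)) (Or.inl hd.ne')
      simpa using this
    have t2 : Tendsto (fun n : ℕ => (n : ℝ) ^ (1 / (n : ℝ))) atTop (𝓝 1) :=
      tendsto_rpow_div.comp tendsto_natCast_atTop_atTop
    simpa using (t1.div t2 one_ne_zero).mul_const 2
  refine tendsto_of_tendsto_of_tendsto_of_le_of_le' hl tendsto_const_nhds ?_ ?_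
  · filter_upwards [eventually_ge_atTop 1] with n hn
    have hn' : (0 : ℝ) < n := by positivity
    calc d ^ (1 / (n : ℝ)) / (n : ℝ) ^ (1 / (n : ℝ)) * 2
        = ((d / n) ^ 2 * 4 ^ n) ^ (1 / (2 * (n : ℝ))) := by
          rw [Real.mul_rpow (by positivity) (by positivity), e4 n hn,
            ← Real.div_rpow hd.le hn'.le, ← Real.rpow_natCast (d / n) 2,
            ← Real.rpow_mul (by positivity)]
          congr 2
          push_cast
          field_simp
      _ ≤ _ := Real.rpow_le_rpow (by positivity) (hlow n hn) (by positivity)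
  · filter_upwards [eventually_ge_atTop 1] with n hn
    calc I n ^ (1 / (2 * (n : ℝ))) ≤ ((4 : ℝ) ^ n) ^ (1 / (2 * (n : ℝ))) := by
          refine Real.rpow_le_rpow ?_ (hup n) (by positivity)
          exact le_trans (by positivity) (hlow n hn)
      _ = 2 := e4 n hn

/-- The set: the residue of `x + m` modulo `2^s`, `s = log₂ (m+2)`, lies in the lower half. -/
def lowHalf (x : ℤ_[2]) (m : ℕ) : Prop :=
  (PadicInt.toZModPow (Nat.log 2 (m + 2)) (x + (m : ℤ_[2]))).val < 2 ^ (Nat.log 2 (m + 2) - 1)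

open Classical in
/-- The generator of the cocycle. -/
noncomputable def gen (q : ℤ_[2] × ℕ) : ℝ := if lowHalf q.1 q.2 then 2 else 1

lemma gen_or (q : ℤ_[2] × ℕ) : gen q = 1 ∨ gen q = 2 := by
  unfold gen; split_ifs <;> simp

lemma log_pos_two (m : ℕ) : 1 ≤ Nat.log 2 (m + 2) :=
  Nat.log_pos (by norm_num) (by omega)

lemma two_pow_log (m : ℕ) :
    2 ^ Nat.log 2 (m + 2) = 2 * 2 ^ (Nat.log 2 (m + 2) - 1) := by
  rw [← pow_succ', Nat.sub_add_cancel (log_pos_two m)]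

lemma lowHalf_anti (x : ℤ_[2]) (m : ℕ) :
    lowHalf (((2 ^ (Nat.log 2 (m + 2) - 1) : ℕ) : ℤ_[2]) + x) m ↔ ¬ lowHalf x m := by
  unfold lowHalf
  have h1 := two_pow_log m
  have hp : 0 < 2 ^ (Nat.log 2 (m + 2) - 1) := by positivity
  generalize 2 ^ (Nat.log 2 (m + 2) - 1) = h at *
  generalize Nat.log 2 (m + 2) = s at *
  rw [add_assoc, map_add, map_natCast]
  have : NeZero (2 ^ s) := ⟨by positivity⟩
  rw [ZMod.val_add, ZMod.val_natCast_of_lt (by omega)]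
  have hv := ZMod.val_lt (PadicInt.toZModPow s (x + (m : ℤ_[2])))
  generalize (PadicInt.toZModPow s (x + (m : ℤ_[2]))).val = v at *
  rw [h1] at hv ⊢
  rcases lt_or_ge v h with h2 | h2
  · rw [Nat.mod_eq_of_lt (by omega)]; omega
  · rw [Nat.mod_eq_sub_mod (by omega), Nat.mod_eq_of_lt (by omega)]; omega

lemma exists_good (x : ℤ_[2]) (n : ℕ) (hn : 1 ≤ n) :
    ∃ m : ℕ, m + 1 ≤ 8 * n ∧ ∀ k < n, lowHalf ((k : ℤ_[2]) + x) m := by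
  set r := Nat.clog 2 n with hr
  have hr1 : n ≤ 2 ^ r := Nat.le_pow_clog (by norm_num) n
  have hr2 : 2 ^ r ≤ 2 * n := by
    rcases Nat.lt_or_ge 1 n with h | h
    · have := Nat.pow_pred_clog_lt_self (b := 2) (by norm_num) h
      have h0 : 0 < Nat.clog 2 n := Nat.clog_pos (by norm_num) h
      have e : 2 ^ r = 2 * 2 ^ (Nat.clog 2 n).pred := by
        rw [← pow_succ', Nat.pred_eq_sub_one, Nat.sub_add_cancel h0]
      omega
    · have : n = 1 := by omega
      subst this
      simp [hr]
  have : NeZero (2 ^ (r + 1)) := ⟨by positivity⟩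
  set v := (PadicInt.toZModPow (r + 1) (-x + 2)).val with hv
  have hvlt : v < 2 ^ (r + 1) := ZMod.val_lt _
  have hP : 2 ^ (r + 1) = 2 * 2 ^ r := pow_succ' 2 r
  have hpos : 0 < 2 ^ r := by positivity
  refine ⟨2 ^ (r + 1) + v - 2, by omega, fun k hk => ?_⟩
  have e2 : 2 ^ (r + 1) + v - 2 + 2 = 2 ^ (r + 1) + v := by omega
  have hlog : Nat.log 2 (2 ^ (r + 1) + v - 2 + 2) = r + 1 := by
    rw [e2, Nat.log_eq_iff (by left; omega)]
    refine ⟨by omega, ?_⟩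
    rw [pow_succ 2 (r + 1)]; omega
  unfold lowHalf
  rw [hlog]
  have key : PadicInt.toZModPow (r + 1) ((k : ℤ_[2]) + x + ((2 ^ (r + 1) + v - 2 : ℕ) : ℤ_[2]))
      = (k : ZMod (2 ^ (r + 1))) := by
    rw [map_add, map_add, map_natCast, map_natCast]
    rw [Nat.cast_sub (by omega), Nat.cast_add, ZMod.natCast_self, hv, ZMod.natCast_zmod_val,
      map_add, map_neg, show PadicInt.toZModPow (r + 1) (2 : ℤ_[2]) = 2 from map_ofNat _ 2]
    push_cast
    ring
  rw [key, ZMod.val_natCast_of_lt (by omega)]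
  simp only [Nat.add_sub_cancel]
  omega

lemma isOpen_fiber (s : ℕ) (A : Set (ZMod (2 ^ s))) :
    IsOpen ((PadicInt.toZModPow s : ℤ_[2] → ZMod (2 ^ s)) ⁻¹' A) := by
  rw [Metric.isOpen_iff]
  intro x hx
  refine ⟨(2 : ℝ) ^ (-(s : ℤ)), by positivity, fun y hy => ?_⟩
  have : PadicInt.toZModPow s y = PadicInt.toZModPow s x := by
    rw [← sub_eq_zero, ← map_sub, ← RingHom.mem_ker, PadicInt.ker_toZModPow,
      ← PadicInt.norm_le_pow_iff_mem_span_pow, ← dist_eq_norm]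
    exact_mod_cast (Metric.mem_ball.1 hy).le
  simpa [this] using hx

lemma cocycle_avg (x : ℤ_[2]) (m : ℕ) :
    Tendsto (fun n : ℕ => (1 / (n : ℝ)) * (∑ k ∈ Finset.range n, Real.log (gen ((k : ℤ_[2]) + x, m)))
      - Real.log 2 / 2) atTop (𝓝 0) := by
  have := antiperiodic_avg (fun k => Real.log (gen ((k : ℤ_[2]) + x, m)) - Real.log 2 / 2)
    (2 ^ (Nat.log 2 (m + 2) - 1)) (by positivity) (by
      intro k
      have h := lowHalf_anti ((k : ℤ_[2]) + x) m
      rw [← add_assoc, ← Nat.cast_add, add_comm _ k] at h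
      by_cases h1 : lowHalf ((k : ℤ_[2]) + x) m
      · have h2 : ¬ lowHalf (((k + 2 ^ (Nat.log 2 (m + 2) - 1) : ℕ) : ℤ_[2]) + x) m :=
          fun h' => (h.1 h') h1
        simp only [gen, h1, h2, if_true, if_false, Real.log_one]; ring
      · have h2 := h.2 h1
        simp only [gen, h1, h2, if_true, if_false, Real.log_one]; ring)
  refine this.congr' ?_
  filter_upwards [eventually_ge_atTop 1] with n hn
  have hn' : (n : ℝ) ≠ 0 := by positivity
  rw [Finset.sum_sub_distrib, Finset.sum_const, Finset.card_range, nsmul_eq_mul]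
  field_simp

lemma translate_iter (x : ℤ_[2]) (k : ℕ) : (fun z : ℤ_[2] => 1 + z)^[k] x = (k : ℤ_[2]) + x := by
  induction k with
  | zero => simp
  | succ k ih => rw [Function.iterate_succ_apply', ih]; push_cast; ring

/-- the counterexample: there exist standard probability spaces (X,μ), (Y,ν),
an invertible ergodic measure-preserving f : X → X and a measurable {1,2}-valued cocycle
generator g such that for μ-a.e. x: (i) the ergodic averages (1/n)∑ log g(fᵏx,·) converge
in L²(Y,ν) to the constant (log 2)/2, yet (ii) ‖c(n,x)‖₂^{1/n} = (∫ ∏ g² dν)^{1/2n} → 2. -/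
theorem abelian_MET_growth_rate_counterexample :
    ∃ (X : Type) (mX : MeasurableSpace X) (Y : Type) (mY : MeasurableSpace Y)
      (μ : Measure X) (ν : Measure Y) (f : X → X) (g : X × Y → ℝ),
      StandardBorelSpace X ∧ StandardBorelSpace Y ∧
      IsProbabilityMeasure μ ∧ IsProbabilityMeasure ν ∧
      Function.Bijective f ∧ Ergodic f μ ∧
      Measurable g ∧ (∀ p : X × Y, g p = 1 ∨ g p = 2) ∧
      (∀ᵐ x ∂μ,
        Tendsto (fun n : ℕ =>
            ∫ y, ((1 / (n : ℝ)) * (∑ k ∈ Finset.range n, Real.log (g (f^[k] x, y)))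
              - Real.log 2 / 2) ^ 2 ∂ν) atTop (𝓝 0) ∧
        Tendsto (fun n : ℕ =>
            (∫ y, ∏ k ∈ Finset.range n, (g (f^[k] x, y)) ^ 2 ∂ν) ^ (1 / (2 * (n : ℝ))))
          atTop (𝓝 2)) := by
  obtain ⟨ν, hν, d, hd, hνd⟩ := exists_poly_measure
  let mX : MeasurableSpace ℤ_[2] := borel _
  have : BorelSpace ℤ_[2] := ⟨rfl⟩
  let K : TopologicalSpace.PositiveCompacts ℤ_[2] := ⊤
  have hK : IsProbabilityMeasure (Measure.addHaarMeasure K) :=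
    ⟨by simpa [K] using Measure.addHaarMeasure_self (K₀ := K)⟩
  refine ⟨ℤ_[2], mX, ℕ, inferInstance, Measure.addHaarMeasure K, ν, fun z => 1 + z, gen,
    inferInstance, inferInstance, hK, hν, (Equiv.addLeft (1 : ℤ_[2])).bijective, ?_, ?_,
    gen_or, Eventually.of_forall fun x => ?_⟩
  · refine ergodic_add_left_of_denseRange_nsmul ?_ _
    simpa using PadicInt.denseRange_natCast (p := 2)
  · refine measurable_from_prod_countable_left fun m => ?_
    refine Measurable.ite ?_ measurable_const measurable_const
    have h1 : Measurable (fun x : ℤ_[2] => x + (m : ℤ_[2])) :=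
      (continuous_id.add continuous_const).measurable
    exact h1 (isOpen_fiber (Nat.log 2 (m + 2))
      {a | a.val < 2 ^ (Nat.log 2 (m + 2) - 1)}).measurableSet
  · simp only [translate_iter]
    constructor
    · have hb : ∀ (n : ℕ) (m : ℕ), ‖((1 / (n : ℝ)) *
          (∑ k ∈ Finset.range n, Real.log (gen ((k : ℤ_[2]) + x, m))) - Real.log 2 / 2) ^ 2‖
          ≤ (Real.log 2) ^ 2 := by
        intro n m
        have hl : 0 < Real.log 2 := Real.log_pos one_lt_two
        rw [norm_pow, Real.norm_eq_abs]
        refine pow_le_pow_left₀ (abs_nonneg _) ?_ 2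
        have s0 : 0 ≤ ∑ k ∈ Finset.range n, Real.log (gen ((k : ℤ_[2]) + x, m)) :=
          Finset.sum_nonneg fun k _ => by
            rcases gen_or ((k : ℤ_[2]) + x, m) with h | h <;> simp [h, hl.le]
        have s1 : ∑ k ∈ Finset.range n, Real.log (gen ((k : ℤ_[2]) + x, m)) ≤ n * Real.log 2 := by
          have := Finset.sum_le_card_nsmul (Finset.range n)
            (fun k => Real.log (gen ((k : ℤ_[2]) + x, m))) (Real.log 2) (fun k _ => by
            rcases gen_or ((k : ℤ_[2]) + x, m) with h | h <;> simp [h, hl.le])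
          simpa using this
        have a0 : 0 ≤ (1 / (n : ℝ)) *
          (∑ k ∈ Finset.range n, Real.log (gen ((k : ℤ_[2]) + x, m))) := by positivity
        have a1 : (1 / (n : ℝ)) *
          (∑ k ∈ Finset.range n, Real.log (gen ((k : ℤ_[2]) + x, m))) ≤ Real.log 2 := by
          rcases Nat.eq_zero_or_pos n with h | h
          · subst h; simpa using hl.le
          · have : (0 : ℝ) < n := by positivity
            rw [one_div, inv_mul_le_iff₀ this]; exact s1
        rw [abs_le]; constructor <;> linarith
      have := tendsto_integral_of_dominated_convergence (μ := ν) (f := fun _ => (0 : ℝ))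
        (F := fun (n : ℕ) (m : ℕ) => ((1 / (n : ℝ)) *
          (∑ k ∈ Finset.range n, Real.log (gen ((k : ℤ_[2]) + x, m))) - Real.log 2 / 2) ^ 2)
        (fun _ => (Real.log 2) ^ 2) (fun n => (measurable_of_countable _).aestronglyMeasurable)
        (integrable_const _) (fun n => Eventually.of_forall (hb n))
        (Eventually.of_forall fun m => by simpa using (cocycle_avg x m).pow 2)
      simpa using this
    · have p0 : ∀ n m : ℕ, 0 ≤ ∏ k ∈ Finset.range n, (gen ((k : ℤ_[2]) + x, m)) ^ 2 :=
        fun n m => Finset.prod_nonneg fun k _ => sq_nonneg _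
      have p1 : ∀ n m : ℕ, ∏ k ∈ Finset.range n, (gen ((k : ℤ_[2]) + x, m)) ^ 2 ≤ 4 ^ n := by
        intro n m
        calc _ ≤ ∏ k ∈ Finset.range n, (4 : ℝ) :=
              Finset.prod_le_prod (fun k _ => sq_nonneg _) fun k _ => by
                rcases gen_or ((k : ℤ_[2]) + x, m) with h | h <;> rw [h] <;> norm_num
          _ = 4 ^ n := by simp
      have hint : ∀ n : ℕ,
          Integrable (fun m => ∏ k ∈ Finset.range n, (gen ((k : ℤ_[2]) + x, m)) ^ 2) ν := by
        intro n
        refine Integrable.of_bound (measurable_of_countable _).aestronglyMeasurable (4 ^ n)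
          (Eventually.of_forall fun m => ?_)
        rw [Real.norm_eq_abs, abs_of_nonneg (p0 n m)]
        exact p1 n m
      refine root_limit _ (d / 8) (by positivity) ?_ ?_
      · intro n hn
        obtain ⟨m, hm, hk⟩ := exists_good x n hn
        have hn' : (0 : ℝ) < n := by positivity
        have hm' : (m : ℝ) + 1 ≤ 8 * n := by exact_mod_cast hm
        have hval : ∏ k ∈ Finset.range n, (gen ((k : ℤ_[2]) + x, m)) ^ 2 = 4 ^ n := by
          rw [Finset.prod_congr rfl (g := fun _ => (4 : ℝ))]
          · simp
          · intro k hk'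
            simp only [gen, hk k (Finset.mem_range.1 hk'), if_true]; norm_num
        calc (d / 8 / n) ^ 2 * 4 ^ n ≤ (d / ((m : ℝ) + 1)) ^ 2 * 4 ^ n := by
              rw [div_div]; gcongr
          _ ≤ ν.real {m} * 4 ^ n := by gcongr; exact hνd m
          _ = ∫ y in {m}, ∏ k ∈ Finset.range n, (gen ((k : ℤ_[2]) + x, y)) ^ 2 ∂ν := by
              rw [integral_singleton, hval, smul_eq_mul]
          _ ≤ _ := setIntegral_le_integral (hint n) (Eventually.of_forall (p0 n))
      · intro n
        calc _ ≤ ∫ _, (4 : ℝ) ^ n ∂ν := integral_mono (hint n) (integrable_const _) (p1 n)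
          _ = 4 ^ n := by simp
end

section
/- Let H be a complex Hilbert space and M ⊆ B(H) a von Neumann algebra which is diffuse, meaning: for every projection p ∈ M with p ≠ 0 there exists a projection q ∈ M with q ≤ p (i.e. q p = q), q ≠ 0 and q ≠ p. Then M contains no nonzero compact operator: if x ∈ M is a compact operator on H, then x = 0. -/
theorem no_finiteRank_projection
    {H : Type*} [NormedAddCommGroup H] [InnerProductSpace ℂ H] [CompleteSpace H]
    (M : VonNeumannAlgebra H)
    (hdiffuse : ∀ p : H →L[ℂ] H, p ∈ M → IsSelfAdjoint p → p * p = p → p ≠ 0 →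
      ∃ q : H →L[ℂ] H, q ∈ M ∧ IsSelfAdjoint q ∧ q * q = q ∧ q * p = q ∧ q ≠ 0 ∧ q ≠ p)
    (n : ℕ) : ∀ p : H →L[ℂ] H, p ∈ M → IsSelfAdjoint p → p * p = p →
      FiniteDimensional ℂ p.range → Module.finrank ℂ p.range = n → p = 0 := by
  induction n using Nat.strong_induction_on with
  | _ n ih =>
    intro p hp hsa hpp hfd hn
    by_contra h0
    obtain ⟨q, hq, hqsa, hqq, hqp, hq0, hqne⟩ := hdiffuse p hp hsa hpp h0
    have hpq : p * q = q := by
      have := congrArg star hqp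
      rwa [star_mul, hsa.star_eq, hqsa.star_eq] at this
    have hle : q.range ≤ p.range := by
      rintro _ ⟨v, rfl⟩
      exact ⟨q v, by simpa using congrArg (fun f : H →L[ℂ] H => f v) hpq⟩
    have hlt : q.range < p.range := by
      refine lt_of_le_of_ne hle fun he => hqne ?_
      have : q * p = p := by
        ext v
        have hv : p v ∈ q.range := by rw [he]; exact ⟨v, rfl⟩
        obtain ⟨w, hw⟩ := hv
        have hw' : q w = p v := hw
        have := congrArg (fun f : H →L[ℂ] H => f w) hqq
        simp only [ContinuousLinearMap.mul_apply] at this ⊢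
        rw [← hw', this]
      exact hqp.symm.trans this
    have hf := Submodule.finrank_lt_finrank_of_lt hlt
    exact hq0 (ih _ (hn ▸ hf) q hq hqsa hqq
      (Submodule.finiteDimensional_of_le hle) rfl)

/-- a diffuse von Neumann algebra contains no nonzero compact operator. -/
theorem diffuse_vonNeumannAlgebra_no_compact
    {H : Type*} [NormedAddCommGroup H] [InnerProductSpace ℂ H] [CompleteSpace H]
    (M : VonNeumannAlgebra H)
    (hdiffuse : ∀ p : H →L[ℂ] H, p ∈ M → IsSelfAdjoint p → p * p = p → p ≠ 0 →
      ∃ q : H →L[ℂ] H, q ∈ M ∧ IsSelfAdjoint q ∧ q * q = q ∧ q * p = q ∧ q ≠ 0 ∧ q ≠ p)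
    (x : H →L[ℂ] H) (hx : x ∈ M) (hcx : IsCompactOperator (x : H → H)) :
    x = 0 := by
  have hy : star x * x ∈ M := mul_mem (star_mem hx) hx
  have hcy : IsCompactOperator ((star x * x : H →L[ℂ] H) : H → H) := hcx.clm_comp (star x)
  have hsy : IsSelfAdjoint (star x * x) := IsSelfAdjoint.star_mul_self x
  rw [← CStarRing.star_mul_self_eq_zero_iff]
  generalize star x * x = y at hy hcy hsy
  have hsym : (y : H →ₗ[ℂ] H).IsSymmetric := hsy.isSymmetric
  have hz := ContinuousLinearMap.eq_zero_of_forall_hasEigenvalue_eq_zero hcy hsym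
  apply hz.1
  intro μ hμ
  by_contra hμ0
  have hfd := ContinuousLinearMap.finite_dimensional_eigenspace hcy μ hμ0
  set E := Module.End.eigenspace (y : H →ₗ[ℂ] H) μ with hE
  have hrange : E.starProjection.range = E := Submodule.range_starProjection E
  have hp : IsStarProjection E.starProjection := isStarProjection_starProjection
  have hmem : E.starProjection ∈ M := by
    rw [VonNeumannAlgebra.IsStarProjection.mem_iff hp]
    intro z hz
    rw [hrange]
    intro v hv
    rw [Module.End.mem_eigenspace_iff] at hv
    rw [Submodule.mem_comap, Module.End.mem_eigenspace_iff]
    have hc := congrArg (fun f : H →L[ℂ] H => f v)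
      (VonNeumannAlgebra.mem_commutant_iff.1 hz y hy)
    have hv' : y v = μ • v := hv
    simp only [ContinuousLinearMap.mul_apply, hv', map_smul] at hc
    exact hc
  have h0 := no_finiteRank_projection M hdiffuse _ E.starProjection hmem hp.isSelfAdjoint
    hp.isIdempotentElem (by rw [hrange]; exact hfd) rfl
  apply hμ
  show E = ⊥
  rw [← hrange, h0]
  ext; simp [eq_comm]
end

section
/- Let G be a group and (g_n)_{n∈ℕ} a sequence of pairwise distinct elements of G. Then the left translation operators λ(g_n) on ℓ²(G), defined by (λ(g)ξ)(h) = ξ(g⁻¹h), converge to 0 in the weak operator topology: for all ξ, η ∈ ℓ²(G;ℂ), the inner products ⟨λ(g_n)ξ, η⟩ = ∑_{h∈G} conj(η(h)) ξ(g_n⁻¹ h) tend to 0 as n → ∞. -/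
open Filter Topology

/-- for a sequence of pairwise distinct group elements g_n, the left
translation operators λ(g_n) on ℓ²(G) tend to 0 in the weak operator topology:
⟨λ(g_n)ξ, η⟩ = ∑_h conj(η h) · ξ(g_n⁻¹ h) → 0 for all ξ, η ∈ ℓ²(G;ℂ). -/
theorem leftTranslation_tendsto_zero_WOT
    {G : Type*} [Group G] (g : ℕ → G) (hg : Function.Injective g)
    (ξ η : lp (fun _ : G => ℂ) 2) :
    Tendsto (fun n : ℕ => ∑' h : G, (starRingEnd ℂ) (η h) * ξ ((g n)⁻¹ * h))
      atTop (𝓝 0) := by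
  classical
  have h2 : 0 < (2 : ENNReal).toReal := by norm_num
  have hsum : Summable fun h => ‖ξ h‖ ^ (2 : ENNReal).toReal := (lp.memℓp ξ).summable h2
  have hmem : ∀ n, Memℓp (fun h : G => ξ ((g n)⁻¹ * h)) 2 := fun n =>
    memℓp_gen ((Equiv.mulLeft (g n)⁻¹).summable_iff.mpr hsum)
  let u : ℕ → lp (fun _ : G => ℂ) 2 := fun n => ⟨fun h => ξ ((g n)⁻¹ * h), hmem n⟩
  have hu : ∀ n, ‖u n‖ = ‖ξ‖ := by
    intro n
    rw [lp.norm_eq_tsum_rpow h2, lp.norm_eq_tsum_rpow h2]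
    congr 1
    exact (Equiv.mulLeft (g n)⁻¹).tsum_eq (fun h => ‖ξ h‖ ^ (2 : ENNReal).toReal)
  have hin : ∀ n, ∑' h : G, (starRingEnd ℂ) (η h) * ξ ((g n)⁻¹ * h) = inner ℂ η (u n) := by
    intro n
    rw [lp.inner_eq_tsum]
    refine tsum_congr fun h => ?_
    rw [RCLike.inner_apply, mul_comm]
  simp_rw [hin]
  -- coordinates of `ξ` vanish at infinity
  have hξ : Tendsto (fun h => ξ h) cofinite (𝓝 0) := by
    have h0 : Tendsto (fun h => ‖ξ h‖ ^ 2) cofinite (𝓝 0) := by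
      simpa using hsum.tendsto_cofinite_zero
    have h1 := h0.sqrt
    simp only [Real.sqrt_sq (norm_nonneg _), Real.sqrt_zero] at h1
    exact tendsto_zero_iff_norm_tendsto_zero.mpr h1
  have hcoord : ∀ k, Tendsto (fun n => u n k) atTop (𝓝 0) := by
    intro k
    have hinj : Function.Injective fun n => (g n)⁻¹ * k := fun a b hab =>
      hg (inv_injective (mul_right_cancel hab))
    have := hξ.comp hinj.tendsto_cofinite
    rw [Nat.cofinite_eq_atTop] at this
    exact this
  have hfin : ∀ s : Finset G, Tendsto
      (fun n => inner ℂ (∑ k ∈ s, lp.single 2 k (η k)) (u n)) atTop (𝓝 0) := by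
    intro s
    simp_rw [sum_inner, lp.inner_single_left, RCLike.inner_apply]
    rw [show (0 : ℂ) = ∑ k ∈ s, (0 : ℂ) from Finset.sum_const_zero.symm]
    refine tendsto_finset_sum s fun k _ => ?_
    simpa using (hcoord k).mul_const ((starRingEnd ℂ) (η k))
  have hη : HasSum (fun k => lp.single 2 k (η k)) η := lp.hasSum_single (by norm_num) η
  rw [Metric.tendsto_atTop]
  intro ε hε
  have hδ : 0 < ε / 2 / (‖ξ‖ + 1) := by positivity
  obtain ⟨s, hs⟩ := ((Metric.tendsto_nhds.mp hη) _ hδ).exists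
  obtain ⟨N, hN⟩ := Metric.tendsto_atTop.mp (hfin s) (ε / 2) (by positivity)
  refine ⟨N, fun n hn => ?_⟩
  have h3 := hN n hn
  rw [dist_zero_right] at h3 ⊢
  rw [dist_comm, dist_eq_norm] at hs
  set v := ∑ k ∈ s, lp.single (E := fun _ : G => ℂ) 2 k (η k)
  have h4 : ‖inner ℂ (η - v) (u n)‖ ≤ ε / 2 := by
    calc ‖inner ℂ (η - v) (u n)‖ ≤ ‖η - v‖ * ‖u n‖ := norm_inner_le_norm _ _
      _ ≤ ε / 2 / (‖ξ‖ + 1) * (‖ξ‖ + 1) := by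
        rw [hu]; gcongr; linarith
      _ = ε / 2 := by field_simp
  calc ‖inner ℂ η (u n)‖ = ‖inner ℂ (η - v) (u n) + inner ℂ v (u n)‖ := by
        rw [← inner_add_left, sub_add_cancel]
    _ ≤ ‖inner ℂ (η - v) (u n)‖ + ‖inner ℂ v (u n)‖ := norm_add_le _ _
    _ < ε := by linarith
end
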